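/- Every (t-theta, t-pyramid, t-prism)-free connected graph G has isometric path complexity at most 8t + 63. In particular, every (theta, pyramid, prism)-free graph has isometric path complexity at most 71. -/

import Mathlib

open SimpleGraph

variable {V : Type*}

/-- One step of the BFS DAG `G_r`: the edge `ab` is oriented from `a` to `b`
(toward the root `r`), i.e. `d(r,b) = d(r,a) - 1`. -/
def dagStep (G : SimpleGraph V) (r a b : V) : Prop :=
  G.Adj a b ∧ G.dist r a = G.dist r b + 1

/-- Reachability by a directed path in the BFS DAG `G_r`. -/
def dagReach (G : SimpleGraph V) (r a b : V) : Prop :=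
  Relation.ReflTransGen (dagStep G r) a b

/-- A finite set of vertices is an antichain with respect to the root `r`:
its vertices are pairwise unreachable in the BFS DAG `G_r`. -/
def IsAntichainSet (G : SimpleGraph V) (r : V) (A : Finset V) : Prop :=
  ∀ a ∈ A, ∀ b ∈ A, a ≠ b → ¬ dagReach G r a b ∧ ¬ dagReach G r b a

/-- A walk is an isometric path: a shortest path between its endpoints. -/
def IsIsometricPath (G : SimpleGraph V) {u v : V} (p : G.Walk u v) : Prop :=
  p.IsPath ∧ p.length = G.dist u v

/-- The vertices of `p` can be covered by at most `k` many `r`-rooted isometric paths. -/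
def CoveredBy (G : SimpleGraph V) (r : V) {x y : V} (p : G.Walk x y) (k : ℕ) : Prop :=
  ∃ s : Finset (Σ v : V, G.Walk r v), s.card ≤ k ∧
    (∀ q ∈ s, IsIsometricPath G q.2) ∧
    ∀ a ∈ p.support, ∃ q ∈ s, a ∈ q.2.support
/-- `G` contains an (induced) `t`-theta: three internally vertex-disjoint induced
paths from `a` to `b` of lengths at least `t+1`, with no edges between the paths
except at `a` and `b`. -/
def HasTTheta (G : SimpleGraph V) (t : ℕ) : Prop :=
  ∃ (a b : V) (p1 p2 p3 : G.Walk a b),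
    p1.IsPath ∧ p2.IsPath ∧ p3.IsPath ∧
    t + 1 ≤ p1.length ∧ t + 1 ≤ p2.length ∧ t + 1 ≤ p3.length ∧
    (∀ x, x ∈ p1.support → x ∈ p2.support → x = a ∨ x = b) ∧
    (∀ x, x ∈ p1.support → x ∈ p3.support → x = a ∨ x = b) ∧
    (∀ x, x ∈ p2.support → x ∈ p3.support → x = a ∨ x = b) ∧
    (∀ x y, (x ∈ p1.support ∨ x ∈ p2.support ∨ x ∈ p3.support) →
      (y ∈ p1.support ∨ y ∈ p2.support ∨ y ∈ p3.support) → G.Adj x y →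
      s(x, y) ∈ p1.edges ∨ s(x, y) ∈ p2.edges ∨ s(x, y) ∈ p3.edges)

/-- `G` contains an (induced) `t`-prism: three vertex-disjoint induced paths
`a1…b1`, `a2…b2`, `a3…b3` of lengths at least `t`, with triangles `a1a2a3` and
`b1b2b3`, and no other edges between the paths. -/
def HasTPrism (G : SimpleGraph V) (t : ℕ) : Prop :=
  ∃ (a1 a2 a3 b1 b2 b3 : V) (p1 : G.Walk a1 b1) (p2 : G.Walk a2 b2) (p3 : G.Walk a3 b3),
    p1.IsPath ∧ p2.IsPath ∧ p3.IsPath ∧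
    t ≤ p1.length ∧ t ≤ p2.length ∧ t ≤ p3.length ∧
    (∀ x, x ∈ p1.support → x ∉ p2.support) ∧
    (∀ x, x ∈ p1.support → x ∉ p3.support) ∧
    (∀ x, x ∈ p2.support → x ∉ p3.support) ∧
    G.Adj a1 a2 ∧ G.Adj a2 a3 ∧ G.Adj a1 a3 ∧
    G.Adj b1 b2 ∧ G.Adj b2 b3 ∧ G.Adj b1 b3 ∧
    (∀ x y, (x ∈ p1.support ∨ x ∈ p2.support ∨ x ∈ p3.support) →
      (y ∈ p1.support ∨ y ∈ p2.support ∨ y ∈ p3.support) → G.Adj x y →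
      s(x, y) ∈ p1.edges ∨ s(x, y) ∈ p2.edges ∨ s(x, y) ∈ p3.edges ∨
      s(x, y) ∈ ({s(a1, a2), s(a2, a3), s(a1, a3),
                  s(b1, b2), s(b2, b3), s(b1, b3)} : Set (Sym2 V)))

/-- `G` contains an (induced) `t`-pyramid: three induced paths `a…b1`, `a…b2`,
`a…b3` of lengths at least `t`, two of which have lengths at least `t+1`,
vertex-disjoint except at `a`, with triangle `b1b2b3`, and no other edges
between the paths. -/
def HasTPyramid (G : SimpleGraph V) (t : ℕ) : Prop :=
  ∃ (a b1 b2 b3 : V) (p1 : G.Walk a b1) (p2 : G.Walk a b2) (p3 : G.Walk a b3),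
    p1.IsPath ∧ p2.IsPath ∧ p3.IsPath ∧
    t ≤ p1.length ∧ t ≤ p2.length ∧ t ≤ p3.length ∧
    ((t + 1 ≤ p1.length ∧ t + 1 ≤ p2.length) ∨
     (t + 1 ≤ p1.length ∧ t + 1 ≤ p3.length) ∨
     (t + 1 ≤ p2.length ∧ t + 1 ≤ p3.length)) ∧
    (∀ x, x ∈ p1.support → x ∈ p2.support → x = a) ∧
    (∀ x, x ∈ p1.support → x ∈ p3.support → x = a) ∧
    (∀ x, x ∈ p2.support → x ∈ p3.support → x = a) ∧
    G.Adj b1 b2 ∧ G.Adj b2 b3 ∧ G.Adj b1 b3 ∧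
    (∀ x y, (x ∈ p1.support ∨ x ∈ p2.support ∨ x ∈ p3.support) →
      (y ∈ p1.support ∨ y ∈ p2.support ∨ y ∈ p3.support) → G.Adj x y →
      s(x, y) ∈ p1.edges ∨ s(x, y) ∈ p2.edges ∨ s(x, y) ∈ p3.edges ∨
      s(x, y) ∈ ({s(b1, b2), s(b2, b3), s(b1, b3)} : Set (Sym2 V)))

/-!
Fix a root `r` and an isometric path `P`. A subpath `u … v` of `P` that no `r`-rooted isometric path
contains satisfies `|d(r, u) - d(r, v)| < d(u, v)`, and this defect is superadditive along `P`.
Cutting `P` greedily into subpaths without defect, either `4t + 30` of them suffice or `P` carries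
three vertices with `2t + 15` defective cuts between consecutive ones. From each of these vertices a
geodesic runs to `r`. Its last vertex adjacent to `P` has its neighbours on `P` within `3` cuts of
the starting point, so the final parts of the geodesics (the tails) are attached to `P` at places
with defect at least `2t + 9`, which forces the end of the middle tail to be at distance at least
`t + 3` from the other two. Hence an induced path through the outer tails, the piece of `P` between
their attachments and a connection inside the tails from the end of the middle one form an induced
cycle with a path joining two distant places of it. At either end, this path attaches to one vertex,
two adjacent vertices or several vertices of the cycle. This gives a claw or a triangle on each
side, and the three paths between them form a `t`-theta, a `t`-pyramid or a `t`-prism.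
-/

section GeodesicSequences

variable {W : Type*} {G : SimpleGraph V} {c : ℕ → V} {n : ℕ}

/-- The vertices `c 0, …, c n` form an isometric path. Paths are encoded as initial segments of
sequences so that their subpaths are described by inequalities between indices. -/
def IsGeodesicSeq (G : SimpleGraph V) (c : ℕ → V) (n : ℕ) : Prop :=
  ∀ i j, i ≤ j → j ≤ n → G.dist (c i) (c j) = j - i

/-- The vertices `c 0, …, c n` form an induced path. -/
structure IsInducedSeq (G : SimpleGraph V) (c : ℕ → V) (n : ℕ) : Prop where
  injOn : Set.InjOn c (Set.Iic n)
  adj_iff : ∀ i j, i ≤ n → j ≤ n → (G.Adj (c i) (c j) ↔ j = i + 1 ∨ i = j + 1)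

lemma isGeodesicSeq_getVert {x y : V} (p : G.Walk x y) (hp : p.length = G.dist x y) :
    IsGeodesicSeq G p.getVert p.length := by
  intro i j hij hj
  have hsub : ((p.take j).drop i).IsSubwalk p :=
    (Walk.isSubwalk_drop _ i).trans (Walk.isSubwalk_take p j)
  have hlen := length_eq_dist_of_subwalk hp hsub
  rw [Walk.drop_length, Walk.take_length, Walk.take_getVert] at hlen
  rwa [min_eq_left hj, min_eq_right hij, eq_comm] at hlen

lemma IsGeodesicSeq.isInducedSeq (hc : IsGeodesicSeq G c n) : IsInducedSeq G c n where
  injOn i hi j hj hij := by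
    rcases le_total i j with h | h
    · have := hc i j h hj
      rw [hij, SimpleGraph.dist_self] at this
      omega
    · have := hc j i h hi
      rw [hij, SimpleGraph.dist_self] at this
      omega
  adj_iff i j hi hj := by
    rcases le_total i j with h | h
    · rw [← dist_eq_one_iff_adj, hc i j h hj]
      omega
    · rw [← dist_eq_one_iff_adj, SimpleGraph.dist_comm, hc j i h hi]
      omega

namespace IsInducedSeq

lemma adj_succ (hc : IsInducedSeq G c n) {i : ℕ} (hi : i < n) : G.Adj (c i) (c (i + 1)) :=
  (hc.adj_iff i (i + 1) hi.le hi).2 (Or.inl rfl)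

lemma map (hc : IsInducedSeq G c n) {H : SimpleGraph W} (f : G ↪g H) :
    IsInducedSeq H (f ∘ c) n where
  injOn := f.injective.comp_injOn hc.injOn
  adj_iff i j hi hj := by rw [← hc.adj_iff i j hi hj, Function.comp, Function.comp, f.map_adj_iff]

lemma shift (hc : IsInducedSeq G c n) {a m : ℕ} (h : a + m ≤ n) :
    IsInducedSeq G (fun i => c (a + i)) m where
  injOn i hi j hj hij := by
    rw [Set.mem_Iic] at hi hj
    have := hc.injOn (Set.mem_Iic.2 (by omega)) (Set.mem_Iic.2 (by omega)) hij
    omega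
  adj_iff i j hi hj := by
    rw [hc.adj_iff _ _ (by omega) (by omega)]
    omega

lemma mono (hc : IsInducedSeq G c n) {m : ℕ} (h : m ≤ n) : IsInducedSeq G c m where
  injOn := hc.injOn.mono (Set.Iic_subset_Iic.2 h)
  adj_iff i j hi hj := hc.adj_iff i j (hi.trans h) (hj.trans h)

lemma isPath {x y : V} {p : G.Walk x y} (hp : IsInducedSeq G p.getVert p.length) : p.IsPath :=
  (Walk.IsPath.getVert_injOn_iff p).1 hp.injOn

lemma isChordless {x y : V} {p : G.Walk x y} (hp : IsInducedSeq G p.getVert p.length) :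
    p.IsChordless := by
  rw [Walk.isChordless_iff_forall_mem_edges]
  intro u v hu hv huv
  obtain ⟨i, rfl, hi⟩ := Walk.mem_support_iff_exists_getVert.1 hu
  obtain ⟨j, rfl, hj⟩ := Walk.mem_support_iff_exists_getVert.1 hv
  rw [← Walk.adj_toSubgraph_iff_mem_edges]
  rcases (hp.adj_iff i j hi hj).1 huv with rfl | rfl
  · exact p.toSubgraph_adj_getVert (by omega)
  · exact (p.toSubgraph_adj_getVert (by omega)).symm

end IsInducedSeq

end GeodesicSequences

section Reachability

variable {G : SimpleGraph V} {X Y : Set V} {x y z : V}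

/-- `x` and `y` are joined by a walk with all vertices in `X`. Unlike reachability in `G.induce X`,
this carries no membership proofs in its type. -/
def ReachableIn (G : SimpleGraph V) (X : Set V) (x y : V) : Prop :=
  ∃ p : G.Walk x y, ∀ v ∈ p.support, v ∈ X

namespace ReachableIn

lemma refl (hx : x ∈ X) : ReachableIn G X x x :=
  ⟨Walk.nil, by simpa using hx⟩

lemma of_adj (hx : x ∈ X) (hy : y ∈ X) (h : G.Adj x y) : ReachableIn G X x y :=
  ⟨h.toWalk, by simp [hx, hy]⟩

lemma symm (h : ReachableIn G X x y) : ReachableIn G X y x := by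
  obtain ⟨p, hp⟩ := h
  exact ⟨p.reverse, by simpa using hp⟩

lemma trans (hxy : ReachableIn G X x y) (hyz : ReachableIn G X y z) : ReachableIn G X x z := by
  obtain ⟨p, hp⟩ := hxy
  obtain ⟨q, hq⟩ := hyz
  exact ⟨p.append q, fun v hv => ((Walk.mem_support_append_iff p q).1 hv).elim (hp v) (hq v)⟩

lemma mono (hXY : X ⊆ Y) (h : ReachableIn G X x y) : ReachableIn G Y x y := by
  obtain ⟨p, hp⟩ := h
  exact ⟨p, fun v hv => hXY (hp v hv)⟩

lemma left_mem (h : ReachableIn G X x y) : x ∈ X := by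
  obtain ⟨p, hp⟩ := h
  exact hp x p.start_mem_support

lemma right_mem (h : ReachableIn G X x y) : y ∈ X :=
  h.symm.left_mem

lemma exists_isInducedSeq (h : ReachableIn G X x y) :
    ∃ p : G.Walk x y, (∀ i, p.getVert i ∈ X) ∧ IsInducedSeq G p.getVert p.length := by
  obtain ⟨p, hp⟩ := h
  obtain ⟨q, hq⟩ := (p.induce X hp).reachable.exists_walk_length_eq_dist
  let q' := q.map (Embedding.induce X).toHom
  have hget : q'.getVert = fun i => (q.getVert i : V) := funext (Walk.getVert_map _ q)
  have hlen : q'.length = q.length := Walk.length_map _ q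
  have hind : IsInducedSeq G q'.getVert q'.length := by
    rw [hget, hlen]
    exact (isGeodesicSeq_getVert q hq).isInducedSeq.map (Embedding.induce X)
  exact ⟨q', fun i => congrFun hget i ▸ (q.getVert i).2, hind⟩

lemma exists_isPath_isChordless (h : ReachableIn G X x y) :
    ∃ p : G.Walk x y, p.IsPath ∧ p.IsChordless ∧ ∀ v ∈ p.support, v ∈ X := by
  obtain ⟨p, hpX, hp⟩ := h.exists_isInducedSeq
  refine ⟨p, hp.isPath, hp.isChordless, fun v hv => ?_⟩
  obtain ⟨i, rfl, -⟩ := Walk.mem_support_iff_exists_getVert.1 hv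
  exact hpX i

end ReachableIn

lemma IsInducedSeq.reachableIn_image_Icc {c : ℕ → V} {n i j : ℕ} (hc : IsInducedSeq G c n)
    (hij : i ≤ j) (hj : j ≤ n) : ReachableIn G (c '' Set.Icc i j) (c i) (c j) := by
  induction j, hij using Nat.le_induction with
  | base => exact .refl ⟨i, by simp, rfl⟩
  | succ j hij ih =>
    refine ((ih (by omega)).mono (Set.image_mono (Set.Icc_subset_Icc_right j.le_succ))).trans ?_
    exact .of_adj ⟨j, ⟨hij, j.le_succ⟩, rfl⟩ ⟨j + 1, ⟨hij.trans j.le_succ, le_rfl⟩, rfl⟩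
      (hc.adj_succ hj)

/-- A shortest connection to the set `R`, cut at the first vertex with a neighbour in `R`. -/
lemma ReachableIn.exists_isInducedSeq_attached {R : Set V} (h : ReachableIn G X x y) (hy : y ∈ R)
    (hx : x ∉ R) (hxR : ∀ v ∈ R, ¬ G.Adj x v) :
    ∃ (s : ℕ → V) (l : ℕ), s 0 = x ∧ 0 < l ∧ IsInducedSeq G s l ∧
      (∀ i ≤ l, s i ∈ X) ∧ (∀ i ≤ l, s i ∉ R) ∧
      (∀ i ≤ l, ∀ v ∈ R, G.Adj (s i) v → i = l) ∧ ∃ v ∈ R, G.Adj (s l) v := by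
  classical
  obtain ⟨p, hpX, hp⟩ := h.exists_isInducedSeq
  have hlen : p.length ≠ 0 := fun h0 => hx (Walk.eq_of_length_eq_zero h0 ▸ hy)
  have hex : ∃ i, i < p.length ∧ ∃ v ∈ R, G.Adj (p.getVert i) v := by
    refine ⟨p.length - 1, by omega, y, hy, ?_⟩
    have := p.adj_getVert_succ (i := p.length - 1) (by omega)
    rwa [Nat.sub_add_cancel (Nat.pos_of_ne_zero hlen), Walk.getVert_length] at this
  obtain ⟨hl, hlR⟩ := Nat.find_spec hex
  set l := Nat.find hex
  have hmin : ∀ i ≤ l, (∃ v ∈ R, G.Adj (p.getVert i) v) → l ≤ i := fun i hi hiR =>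
    Nat.find_min' hex ⟨hi.trans_lt hl, hiR⟩
  refine ⟨p.getVert, l, p.getVert_zero, Nat.pos_of_ne_zero fun h0 => ?_, hp.mono hl.le,
    fun i _ => hpX i, fun i hi hiR => ?_,
    fun i hi v hv hadj => hi.antisymm (hmin i hi ⟨v, hv, hadj⟩), hlR⟩
  · obtain ⟨v, hv, hadj⟩ := hlR
    rw [h0, Walk.getVert_zero] at hadj
    exact hxR v hv hadj
  · obtain _ | i := i
    · exact hx (p.getVert_zero ▸ hiR)
    · have := hmin i (by omega) ⟨_, hiR, p.adj_getVert_succ (by omega)⟩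
      omega

end Reachability

section ThreePathConfigurations

variable {G : SimpleGraph V} {t : ℕ} {a b v w : V} {o o' x x' : Fin 3 → V}
  {A A' : Fin 3 → Set V}

/-- How legs centred at `a` and `b` may touch at vertices `v` and `w`: only at the centres if these
differ, as in a triangle, and only if one vertex is the centre if they agree, as in a claw. -/
def CenterContact (a b v w : V) : Prop :=
  v = a ∧ w = b ∨ a = b ∧ (v = a ∨ w = b)

lemma CenterContact.symm (h : CenterContact a b v w) : CenterContact b a w v := by
  grind [CenterContact]

lemma centerContact_self_iff : CenterContact a b v v ↔ a = b ∧ v = a := by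
  grind [CenterContact]

/-- One end of a theta, a pyramid or a prism: three legs `A i`, each joining a centre `o i` to a
vertex `x i`. The three centres either coincide or form a triangle. -/
structure IsTripod (G : SimpleGraph V) (o x : Fin 3 → V) (A : Fin 3 → Set V) : Prop where
  center : (∀ i j, o i = o j) ∨ ∀ i j, i ≠ j → G.Adj (o i) (o j)
  reachable : ∀ i, ReachableIn G (A i) (o i) (x i)
  contact : ∀ i j, i ≠ j → ∀ v ∈ A i, ∀ w ∈ A j, v = w ∨ G.Adj v w →
    CenterContact (o i) (o j) v w

/-- The legs `A` and `A'` are disjoint and the edges `x i – x' i` are the only ones between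
them. -/
structure IsLinked (G : SimpleGraph V) (x x' : Fin 3 → V) (A A' : Fin 3 → Set V) : Prop where
  adj : ∀ i, G.Adj (x i) (x' i)
  ne : ∀ i j, ∀ v ∈ A i, ∀ w ∈ A' j, v ≠ w
  eq_of_adj : ∀ i j, ∀ v ∈ A i, ∀ w ∈ A' j, G.Adj v w → ∃ k, v = x k ∧ w = x' k

lemma IsLinked.symm (h : IsLinked G x x' A A') : IsLinked G x' x A' A where
  adj i := (h.adj i).symm
  ne i j v hv w hw := (h.ne j i w hw v hv).symm
  eq_of_adj i j v hv w hw hvw :=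
    (h.eq_of_adj j i w hw v hv hvw.symm).imp fun _ hk => hk.symm

/-- The common shape of thetas, pyramids and prisms: three induced paths meeting only at their
ends. -/
structure IsThreePathConfiguration (G : SimpleGraph V) (o o' : Fin 3 → V)
    (p : ∀ i, G.Walk (o i) (o' i)) : Prop where
  isPath : ∀ i, (p i).IsPath
  isChordless : ∀ i, (p i).IsChordless
  contact : ∀ i j, i ≠ j → ∀ v ∈ (p i).support, ∀ w ∈ (p j).support, v = w ∨ G.Adj v w →
    CenterContact (o i) (o j) v w ∨ CenterContact (o' i) (o' j) v w

lemma IsTripod.contact_of_linked (h : IsTripod G o x A) (h' : IsTripod G o' x' A')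
    (hl : IsLinked G x x' A A') {i j : Fin 3} (hij : i ≠ j) (hv : v ∈ A i) (hw : w ∈ A' j)
    (hvw : v = w ∨ G.Adj v w) :
    CenterContact (o i) (o j) v w ∨ CenterContact (o' i) (o' j) v w := by
  obtain ⟨k, rfl, rfl⟩ := hl.eq_of_adj i j v hv w hw (hvw.resolve_left (hl.ne i j v hv w hw))
  by_cases hki : k = i
  · subst hki
    obtain ⟨ho, hx⟩ := centerContact_self_iff.1 <|
      h'.contact k j hij (x' k) (h'.reachable k).right_mem (x' k) hw (Or.inl rfl)
    exact Or.inr (Or.inr ⟨ho, Or.inr (hx.trans ho)⟩)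
  · obtain ⟨ho, hx⟩ := centerContact_self_iff.1 <|
      h.contact k i hki (x k) (h.reachable k).right_mem (x k) hv (Or.inl rfl)
    rcases h.center with hclaw | htri
    · exact Or.inl (Or.inr ⟨hclaw i j, Or.inl (hx.trans ho)⟩)
    · exact absurd ho (htri k i hki).ne

lemma IsTripod.exists_isThreePathConfiguration (h : IsTripod G o x A) (h' : IsTripod G o' x' A')
    (hl : IsLinked G x x' A A') : ∃ p, IsThreePathConfiguration G o o' p := by
  have hjoin : ∀ i, ReachableIn G (A i ∪ A' i) (o i) (o' i) := fun i =>
    (((h.reachable i).mono Set.subset_union_left).trans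
      (.of_adj (Or.inl (h.reachable i).right_mem) (Or.inr (h'.reachable i).right_mem)
        (hl.adj i))).trans ((h'.reachable i).symm.mono Set.subset_union_right)
  choose p hpath hchordless hsub using fun i => (hjoin i).exists_isPath_isChordless
  refine ⟨p, hpath, hchordless, fun i j hij v hv w hw hvw => ?_⟩
  rcases hsub i v hv with hv | hv <;> rcases hsub j w hw with hw | hw
  · exact Or.inl (h.contact i j hij v hv w hw hvw)
  · exact h.contact_of_linked h' hl hij hv hw hvw
  · exact (h.contact_of_linked h' hl hij.symm hw hv
      (hvw.imp Eq.symm fun hadj => hadj.symm)).imp .symm .symm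
  · exact Or.inr (h'.contact i j hij v hv w hw hvw)

namespace IsThreePathConfiguration

variable {p : ∀ i, G.Walk (o i) (o' i)}

lemma eq_center_of_mem_support (hp : IsThreePathConfiguration G o o' p) {i j : Fin 3}
    (hij : i ≠ j) (hvi : v ∈ (p i).support) (hvj : v ∈ (p j).support) :
    o i = o j ∧ v = o i ∨ o' i = o' j ∧ v = o' i :=
  (hp.contact i j hij v hvi v hvj (Or.inl rfl)).imp centerContact_self_iff.1
    centerContact_self_iff.1

lemma mem_edges_of_adj (hp : IsThreePathConfiguration G o o' p) {i j : Fin 3}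
    (hv : v ∈ (p i).support) (hw : w ∈ (p j).support) (hvw : G.Adj v w) :
    s(v, w) ∈ (p i).edges ∨ s(v, w) ∈ (p j).edges ∨
      (i ≠ j ∧ v = o i ∧ w = o j) ∨ (i ≠ j ∧ v = o' i ∧ w = o' j) := by
  have hedge : ∀ k, v ∈ (p k).support → w ∈ (p k).support → s(v, w) ∈ (p k).edges :=
    fun k hvk hwk => (hp.isChordless k).mem_edges hvk hwk hvw
  by_cases hij : i = j
  · subst hij
    exact Or.inl (hedge i hv hw)
  have hstart : ∀ k, o k ∈ (p k).support := fun k => (p k).start_mem_support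
  have hend : ∀ k, o' k ∈ (p k).support := fun k => (p k).end_mem_support
  rcases hp.contact i j hij v hv w hw (Or.inr hvw) with
    (h | ⟨ho, rfl | rfl⟩) | (h | ⟨ho, rfl | rfl⟩)
  · exact Or.inr (Or.inr (Or.inl ⟨hij, h⟩))
  · exact Or.inr (Or.inl (hedge j (ho.symm ▸ hstart j) hw))
  · exact Or.inl (hedge i hv (ho ▸ hstart i))
  · exact Or.inr (Or.inr (Or.inr ⟨hij, h⟩))
  · exact Or.inr (Or.inl (hedge j (ho.symm ▸ hend j) hw))
  · exact Or.inl (hedge i hv (ho ▸ hend i))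

lemma hasTPrism (hp : IsThreePathConfiguration G o o' p)
    (ho : ∀ i j, i ≠ j → G.Adj (o i) (o j)) (ho' : ∀ i j, i ≠ j → G.Adj (o' i) (o' j))
    (hlen : ∀ i, t ≤ (p i).length) : HasTPrism G t := by
  have hdisj : ∀ i j, i ≠ j → ∀ v ∈ (p i).support, v ∉ (p j).support := fun i j hij v hvi hvj =>
    (hp.eq_center_of_mem_support hij hvi hvj).elim (fun h => (ho i j hij).ne h.1)
      fun h => (ho' i j hij).ne h.1
  refine ⟨o 0, o 1, o 2, o' 0, o' 1, o' 2, p 0, p 1, p 2, hp.isPath 0, hp.isPath 1, hp.isPath 2,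
    hlen 0, hlen 1, hlen 2, hdisj 0 1 (by decide), hdisj 0 2 (by decide), hdisj 1 2 (by decide),
    ho 0 1 (by decide), ho 1 2 (by decide), ho 0 2 (by decide),
    ho' 0 1 (by decide), ho' 1 2 (by decide), ho' 0 2 (by decide), ?_⟩
  rintro v w (hv | hv | hv) (hw | hw | hw) hvw <;>
  · rcases hp.mem_edges_of_adj hv hw hvw with h | h | ⟨hne, rfl, rfl⟩ | ⟨hne, rfl, rfl⟩
    · tauto
    · tauto
    · simp at hne ⊢
    · simp at hne ⊢

lemma hasTTheta {p : Fin 3 → G.Walk a b}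
    (hp : IsThreePathConfiguration G (fun _ => a) (fun _ => b) p)
    (hlen : ∀ i, t + 1 ≤ (p i).length) : HasTTheta G t := by
  have hmeet : ∀ i j, i ≠ j → ∀ v, v ∈ (p i).support → v ∈ (p j).support → v = a ∨ v = b :=
    fun i j hij v hvi hvj =>
      (hp.eq_center_of_mem_support hij hvi hvj).imp And.right And.right
  refine ⟨a, b, p 0, p 1, p 2, hp.isPath 0, hp.isPath 1, hp.isPath 2, hlen 0, hlen 1, hlen 2,
    hmeet 0 1 (by decide), hmeet 0 2 (by decide), hmeet 1 2 (by decide), ?_⟩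
  rintro v w (hv | hv | hv) (hw | hw | hw) hvw <;>
  · rcases hp.mem_edges_of_adj hv hw hvw with h | h | ⟨-, rfl, rfl⟩ | ⟨-, rfl, rfl⟩
    · tauto
    · tauto
    · exact absurd rfl hvw.ne
    · exact absurd rfl hvw.ne

lemma hasTPyramid {p : ∀ i, G.Walk a (o' i)} (hp : IsThreePathConfiguration G (fun _ => a) o' p)
    (ho' : ∀ i j, i ≠ j → G.Adj (o' i) (o' j)) (hlen : ∀ i, t + 1 ≤ (p i).length) :
    HasTPyramid G t := by
  have hmeet : ∀ i j, i ≠ j → ∀ v, v ∈ (p i).support → v ∈ (p j).support → v = a :=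
    fun i j hij v hvi hvj => (hp.eq_center_of_mem_support hij hvi hvj).elim And.right
      fun h => absurd h.1 (ho' i j hij).ne
  have hlen' : ∀ i, t ≤ (p i).length := fun i => t.le_succ.trans (hlen i)
  refine ⟨a, o' 0, o' 1, o' 2, p 0, p 1, p 2, hp.isPath 0, hp.isPath 1, hp.isPath 2,
    hlen' 0, hlen' 1, hlen' 2, Or.inl ⟨hlen 0, hlen 1⟩,
    hmeet 0 1 (by decide), hmeet 0 2 (by decide), hmeet 1 2 (by decide),
    ho' 0 1 (by decide), ho' 1 2 (by decide), ho' 0 2 (by decide), ?_⟩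
  rintro v w (hv | hv | hv) (hw | hw | hw) hvw <;>
  · rcases hp.mem_edges_of_adj hv hw hvw with h | h | ⟨-, rfl, rfl⟩ | ⟨hne, rfl, rfl⟩
    · tauto
    · tauto
    · exact absurd rfl hvw.ne
    · simp at hne ⊢

end IsThreePathConfiguration

lemma IsTripod.hasTTheta_or_hasTPyramid_or_hasTPrism (h : IsTripod G o x A)
    (h' : IsTripod G o' x' A') (hl : IsLinked G x x' A A')
    (hdist : ∀ i j, t + 1 ≤ G.dist (o i) (o' j)) :
    HasTTheta G t ∨ HasTPyramid G t ∨ HasTPrism G t := by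
  obtain ⟨p, hp⟩ := h.exists_isThreePathConfiguration h' hl
  obtain ⟨q, hq⟩ := h'.exists_isThreePathConfiguration h hl.symm
  have hlen : ∀ i, t + 1 ≤ (p i).length := fun i => (hdist i i).trans (dist_le _)
  have hlen' : ∀ i, t + 1 ≤ (q i).length := fun i =>
    (hdist i i).trans (SimpleGraph.dist_comm.trans_le (dist_le _))
  have hconst : ∀ f : Fin 3 → V, (∀ i j, f i = f j) → ∃ a, f = fun _ => a :=
    fun f hf => ⟨f 0, funext fun i => hf i 0⟩
  rcases h.center with hc | hc <;> rcases h'.center with hc' | hc'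
  · obtain ⟨a, rfl⟩ := hconst o hc
    obtain ⟨b, rfl⟩ := hconst o' hc'
    exact Or.inl (hp.hasTTheta hlen)
  · obtain ⟨a, rfl⟩ := hconst o hc
    exact Or.inr (Or.inl (hp.hasTPyramid hc' hlen))
  · obtain ⟨b, rfl⟩ := hconst o' hc'
    exact Or.inr (Or.inl (hq.hasTPyramid hc hlen'))
  · exact Or.inr (Or.inr (hp.hasTPrism hc hc' fun i => t.le_succ.trans (hlen i)))

end ThreePathConfigurations

section TripodsFromAttachments

variable {G : SimpleGraph V} {c : ℕ → V} {n l h : ℕ} {M : Set V} {u m v : V}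

lemma IsTripod.of_contact {o x : Fin 3 → V} {A : Fin 3 → Set V}
    (center : (∀ i j, o i = o j) ∨ ∀ i j, i ≠ j → G.Adj (o i) (o j))
    (reachable : ∀ i, ReachableIn G (A i) (o i) (x i))
    (contact : ∀ i j, i < j → ∀ v ∈ A i, ∀ w ∈ A j, v = w ∨ G.Adj v w →
      CenterContact (o i) (o j) v w) :
    IsTripod G o x A where
  center := center
  reachable := reachable
  contact i j hij v hv w hw hvw := by
    rcases hij.lt_or_gt with hlt | hgt
    · exact contact i j hlt v hv w hw hvw
    · exact (contact j i hgt w hw v hv (hvw.imp Eq.symm fun hadj => hadj.symm)).symm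

lemma IsInducedSeq.le_succ_of_contact (hc : IsInducedSeq G c n) {i j : ℕ} (hi : i ≤ n)
    (hj : j ≤ n) (hij : c i = c j ∨ G.Adj (c i) (c j)) : j ≤ i + 1 := by
  rcases hij with heq | hadj
  · have := hc.injOn hi hj heq
    omega
  · have := (hc.adj_iff i j hi hj).1 hadj
    omega

/-- The set `M` joins `u` to `m` and is attached to the path `c 0, …, c n` through `u` only, where
`c l` and `c h` are the first and the last neighbour of `u` on the path. -/
structure IsAttachment (G : SimpleGraph V) (c : ℕ → V) (n : ℕ) (M : Set V) (u m : V)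
    (l h : ℕ) : Prop where
  reachable : ReachableIn G M u m
  notMem : ∀ k ≤ n, c k ∉ M
  eq_of_adj : ∀ v ∈ M, ∀ k ≤ n, G.Adj v (c k) → v = u
  adj_first : G.Adj u (c l)
  adj_last : G.Adj u (c h)
  first_le_last : l ≤ h
  last_le : h ≤ n
  mem_Icc : ∀ k ≤ n, G.Adj u (c k) → k ∈ Set.Icc l h

namespace IsAttachment

lemma contact (hM : IsAttachment G c n M u m l h) (hv : v ∈ M) {k : ℕ} (hk : k ≤ n)
    (hvk : c k = v ∨ G.Adj (c k) v) : v = u ∧ k ∈ Set.Icc l h := by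
  rcases hvk with rfl | hadj
  · exact absurd hv (hM.notMem k hk)
  · obtain rfl := hM.eq_of_adj v hv k hk hadj.symm
    exact ⟨rfl, hM.mem_Icc k hk hadj.symm⟩

lemma isTripod_of_eq (hM : IsAttachment G c n M u m l l) (hc : IsInducedSeq G c n) :
    IsTripod G (fun _ => c l) ![c 0, m, c n]
      ![c '' Set.Icc 0 l, insert (c l) M, c '' Set.Icc l n] := by
  refine .of_contact (Or.inl fun _ _ => rfl) (fun i => ?_) fun i j hij v hv w hw hvw => ?_
  · fin_cases i
    · exact (hc.reachableIn_image_Icc (Nat.zero_le l) hM.last_le).symm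
    · exact (ReachableIn.of_adj (Set.mem_insert _ _) (Or.inr hM.reachable.left_mem)
        hM.adj_first.symm).trans (hM.reachable.mono (Set.subset_insert _ _))
    · exact hc.reachableIn_image_Icc hM.last_le le_rfl
  refine Or.inr ⟨rfl, ?_⟩
  have hln := hM.last_le
  fin_cases i <;> fin_cases j <;> first | exact absurd hij (by decide) | skip
  · obtain ⟨k, ⟨-, hk⟩, rfl⟩ := hv
    rcases hw with rfl | hw
    · exact Or.inr rfl
    · exact Or.inl (congrArg c (hk.antisymm (hM.contact hw (hk.trans hln) hvw).2.1))
  · obtain ⟨k, ⟨-, hk⟩, rfl⟩ := hv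
    obtain ⟨k', ⟨hk', hk'n⟩, rfl⟩ := hw
    have := hc.le_succ_of_contact (hk.trans hln) hk'n hvw
    have : k = l ∨ k' = l := by omega
    exact this.imp (congrArg c) (congrArg c)
  · obtain ⟨k, ⟨hk, hkn⟩, rfl⟩ := hw
    rcases hv with rfl | hv
    · exact Or.inl rfl
    · have := (hM.contact hv hkn (hvw.imp Eq.symm fun hadj => hadj.symm)).2.2
      exact Or.inr (congrArg c (this.antisymm hk))

lemma isTripod_of_succ (hM : IsAttachment G c n M u m l (l + 1)) (hc : IsInducedSeq G c n) :
    IsTripod G ![c l, u, c (l + 1)] ![c 0, m, c n]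
      ![c '' Set.Icc 0 l, M, c '' Set.Icc (l + 1) n] := by
  have hln := hM.last_le
  refine .of_contact (Or.inr fun i j hij => ?_) (fun i => ?_) fun i j hij v hv w hw hvw => ?_
  · have := hM.adj_first
    have := hM.adj_last
    have := hc.adj_succ hln
    fin_cases i <;> fin_cases j <;>
      first | exact absurd rfl hij | assumption | (apply SimpleGraph.Adj.symm; assumption)
  · fin_cases i
    · exact (hc.reachableIn_image_Icc (Nat.zero_le l) (by omega)).symm
    · exact hM.reachable
    · exact hc.reachableIn_image_Icc hln le_rfl
  refine Or.inl ?_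
  fin_cases i <;> fin_cases j <;> first | exact absurd hij (by decide) | skip
  · obtain ⟨k, ⟨-, hk⟩, rfl⟩ := hv
    obtain ⟨rfl, hlk, -⟩ := hM.contact hw (by omega) hvw
    exact ⟨congrArg c (hk.antisymm hlk), rfl⟩
  · obtain ⟨k, ⟨-, hk⟩, rfl⟩ := hv
    obtain ⟨k', ⟨hk', hk'n⟩, rfl⟩ := hw
    have := hc.le_succ_of_contact (by omega) hk'n hvw
    exact ⟨congrArg c (by omega), congrArg c (by omega)⟩
  · obtain ⟨k, ⟨hk, hkn⟩, rfl⟩ := hw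
    obtain ⟨rfl, -, hkl⟩ := hM.contact hv hkn (hvw.imp Eq.symm fun hadj => hadj.symm)
    exact ⟨rfl, congrArg c (hkl.antisymm hk)⟩

lemma isTripod_of_add_two_le (hM : IsAttachment G c n M u m l h) (hc : IsInducedSeq G c n)
    (hlh : l + 2 ≤ h) :
    IsTripod G (fun _ => u) ![c 0, m, c n]
      ![insert u (c '' Set.Icc 0 l), M, insert u (c '' Set.Icc h n)] := by
  have hhn := hM.last_le
  refine .of_contact (Or.inl fun _ _ => rfl) (fun i => ?_) fun i j hij v hv w hw hvw => ?_
  · fin_cases i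
    · exact (ReachableIn.of_adj (Set.mem_insert _ _)
        (Or.inr (Set.mem_image_of_mem c (Set.right_mem_Icc.2 (Nat.zero_le l)))) hM.adj_first).trans
          ((hc.reachableIn_image_Icc (Nat.zero_le l) (by omega)).symm.mono (Set.subset_insert _ _))
    · exact hM.reachable
    · exact (ReachableIn.of_adj (Set.mem_insert _ _)
        (Or.inr (Set.mem_image_of_mem c (Set.left_mem_Icc.2 hhn))) hM.adj_last).trans
          ((hc.reachableIn_image_Icc hhn le_rfl).mono (Set.subset_insert _ _))
  refine Or.inr ⟨rfl, ?_⟩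
  fin_cases i <;> fin_cases j <;> first | exact absurd hij (by decide) | skip
  · rcases hv with rfl | ⟨k, ⟨-, hk⟩, rfl⟩
    · exact Or.inl rfl
    · exact Or.inr (hM.contact hw (by omega) hvw).1
  · rcases hv with rfl | ⟨k, ⟨-, hk⟩, rfl⟩
    · exact Or.inl rfl
    rcases hw with rfl | ⟨k', ⟨hk', hk'n⟩, rfl⟩
    · exact Or.inr rfl
    have := hc.le_succ_of_contact (by omega) hk'n hvw
    omega
  · rcases hw with rfl | ⟨k, ⟨-, hkn⟩, rfl⟩
    · exact Or.inr rfl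
    · exact Or.inl (hM.contact hv hkn (hvw.imp Eq.symm fun hadj => hadj.symm)).1

end IsAttachment

lemma exists_first_last {p : ℕ → Prop} {n : ℕ} (h : ∃ k ≤ n, p k) :
    ∃ a b, a ≤ b ∧ b ≤ n ∧ p a ∧ p b ∧ ∀ k ≤ n, p k → k ∈ Set.Icc a b := by
  classical
  obtain ⟨k, hkn, hk⟩ := h
  have hex : ∃ k, p k := ⟨k, hk⟩
  have hle := Nat.find_min' hex (Nat.findGreatest_spec hkn hk)
  exact ⟨Nat.find hex, Nat.findGreatest p n, hle, Nat.findGreatest_le n, Nat.find_spec hex,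
    Nat.findGreatest_spec hkn hk,
    fun j hjn hj => ⟨Nat.find_min' hex hj, Nat.le_findGreatest hjn hj⟩⟩

lemma IsInducedSeq.exists_isTripod (hc : IsInducedSeq G c n) (hM : ReachableIn G M u m)
    (hdisj : ∀ k ≤ n, c k ∉ M) (hattach : ∀ v ∈ M, ∀ k ≤ n, G.Adj v (c k) → v = u)
    (hadj : ∃ k ≤ n, G.Adj u (c k)) :
    ∃ o A, IsTripod G o ![c 0, m, c n] A ∧ (∀ i, A i ⊆ M ∪ c '' Set.Iic n) ∧
      ∀ i, o i = u ∨ G.Adj u (o i) ∧ o i ∈ c '' Set.Iic n := by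
  obtain ⟨l, h, hlh, hhn, hl, hh, hmem⟩ := exists_first_last hadj
  have hM' : IsAttachment G c n M u m l h :=
    ⟨hM, hdisj, hattach, hl, hh, hlh, hhn, hmem⟩
  have huM : u ∈ M := hM.left_mem
  have himage : ∀ i j, j ≤ n → c '' Set.Icc i j ⊆ M ∪ c '' Set.Iic n := fun i j hj =>
    (Set.image_mono fun _ hk => hk.2.trans hj).trans Set.subset_union_right
  have hmemc : ∀ k ≤ n, c k ∈ c '' Set.Iic n := fun k hk => ⟨k, hk, rfl⟩
  obtain rfl | rfl | hlh' : h = l ∨ h = l + 1 ∨ l + 2 ≤ h := by omega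
  · refine ⟨_, _, hM'.isTripod_of_eq hc, fun i => ?_, fun _ => Or.inr ⟨hl, hmemc _ hhn⟩⟩
    fin_cases i
    · exact himage 0 h hhn
    · exact Set.insert_subset (Or.inr (hmemc _ hhn)) Set.subset_union_left
    · exact himage h n le_rfl
  · refine ⟨_, _, hM'.isTripod_of_succ hc, fun i => ?_, fun i => ?_⟩
    · fin_cases i
      · exact himage 0 l (by omega)
      · exact Set.subset_union_left
      · exact himage (l + 1) n le_rfl
    · fin_cases i
      · exact Or.inr ⟨hl, hmemc _ (by omega)⟩
      · exact Or.inl rfl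
      · exact Or.inr ⟨hh, hmemc _ hhn⟩
  · refine ⟨_, _, hM'.isTripod_of_add_two_le hc hlh', fun i => ?_, fun _ => Or.inl rfl⟩
    fin_cases i
    · exact Set.insert_subset (Or.inl huM) (himage 0 l (by omega))
    · exact Set.subset_union_left
    · exact Set.insert_subset (Or.inl huM) (himage h n le_rfl)

end TripodsFromAttachments

section Turtles

variable {G : SimpleGraph V} {b c s : ℕ → V} {n m l t : ℕ}

/-- A turtle: the paths `b 0, …, b n` and `c 0, …, c m` form an induced cycle with the edges
`b 0 – c 0` and `b n – c m`, and the path `s 0, …, s l` joins them, where only `s 0` has neighbours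
on `b` and only `s l` has neighbours on `c`. -/
structure IsTurtle (G : SimpleGraph V) (b c s : ℕ → V) (n m l : ℕ) : Prop where
  isInducedSeq_b : IsInducedSeq G b n
  isInducedSeq_c : IsInducedSeq G c m
  isInducedSeq_s : IsInducedSeq G s l
  length_pos : 0 < l
  b_ne_c : ∀ i ≤ n, ∀ j ≤ m, b i ≠ c j
  s_ne_b : ∀ k ≤ l, ∀ i ≤ n, s k ≠ b i
  s_ne_c : ∀ k ≤ l, ∀ j ≤ m, s k ≠ c j
  adj_b_c_iff : ∀ i ≤ n, ∀ j ≤ m, G.Adj (b i) (c j) ↔ i = 0 ∧ j = 0 ∨ i = n ∧ j = m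
  eq_zero_of_adj_b : ∀ k ≤ l, ∀ i ≤ n, G.Adj (s k) (b i) → k = 0
  eq_length_of_adj_c : ∀ k ≤ l, ∀ j ≤ m, G.Adj (s k) (c j) → k = l
  exists_adj_b : ∃ i ≤ n, G.Adj (s 0) (b i)
  exists_adj_c : ∃ j ≤ m, G.Adj (s l) (c j)

namespace IsTurtle

lemma isLinked (h : IsTurtle G b c s n m l) {A A' : Fin 3 → Set V}
    (hA : ∀ i, A i ⊆ {s 0} ∪ b '' Set.Iic n) (hA' : ∀ i, A' i ⊆ s '' Set.Icc 1 l ∪ c '' Set.Iic m) :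
    IsLinked G ![b 0, s 0, b n] ![c 0, s 1, c m] A A' where
  adj i := by
    fin_cases i
    · exact (h.adj_b_c_iff 0 n.zero_le 0 m.zero_le).2 (Or.inl ⟨rfl, rfl⟩)
    · exact h.isInducedSeq_s.adj_succ h.length_pos
    · exact (h.adj_b_c_iff n le_rfl m le_rfl).2 (Or.inr ⟨rfl, rfl⟩)
  ne i j v hv w hw := by
    rcases hA i hv with rfl | ⟨a, ha, rfl⟩ <;>
      rcases hA' j hw with ⟨k, ⟨hk, hkl⟩, rfl⟩ | ⟨a', ha', rfl⟩
    · intro heq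
      have := h.isInducedSeq_s.injOn (Set.mem_Iic.2 l.zero_le) hkl heq
      omega
    · exact h.s_ne_c 0 l.zero_le a' ha'
    · exact (h.s_ne_b k hkl a ha).symm
    · exact h.b_ne_c a ha a' ha'
  eq_of_adj i j v hv w hw hvw := by
    rcases hA i hv with rfl | ⟨a, ha, rfl⟩ <;>
      rcases hA' j hw with ⟨k, ⟨hk, hkl⟩, rfl⟩ | ⟨a', ha', rfl⟩
    · have := (h.isInducedSeq_s.adj_iff 0 k l.zero_le hkl).1 hvw
      obtain rfl : k = 1 := by omega
      exact ⟨1, rfl, rfl⟩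
    · exact absurd (h.eq_length_of_adj_c 0 l.zero_le a' ha' hvw) h.length_pos.ne
    · have := h.eq_zero_of_adj_b k hkl a ha hvw.symm
      omega
    · rcases (h.adj_b_c_iff a ha a' ha').1 hvw with ⟨rfl, rfl⟩ | ⟨rfl, rfl⟩
      · exact ⟨0, rfl, rfl⟩
      · exact ⟨2, rfl, rfl⟩

lemma exists_isTripod_b (h : IsTurtle G b c s n m l) :
    ∃ o A, IsTripod G o ![b 0, s 0, b n] A ∧ (∀ i, A i ⊆ {s 0} ∪ b '' Set.Iic n) ∧
      ∀ i, G.dist (s 0) (o i) ≤ 1 := by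
  obtain ⟨o, A, htripod, hsub, ho⟩ := h.isInducedSeq_b.exists_isTripod
    (ReachableIn.refl (Set.mem_singleton (s 0)))
    (fun i hi heq => h.s_ne_b 0 l.zero_le i hi (Set.mem_singleton_iff.1 heq).symm)
    (fun v hv _ _ _ => hv) h.exists_adj_b
  refine ⟨o, A, htripod, hsub, fun i => ?_⟩
  rcases ho i with heq | ⟨hadj, -⟩
  · simp [heq]
  · exact (dist_eq_one_iff_adj.2 hadj).le

lemma exists_isTripod_c (h : IsTurtle G b c s n m l) :
    ∃ o A, IsTripod G o ![c 0, s 1, c m] A ∧ (∀ i, A i ⊆ s '' Set.Icc 1 l ∪ c '' Set.Iic m) ∧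
      ∀ i, ∃ j ≤ m, G.dist (o i) (c j) ≤ 1 := by
  obtain ⟨o, A, htripod, hsub, ho⟩ := h.isInducedSeq_c.exists_isTripod (M := s '' Set.Icc 1 l)
    (h.isInducedSeq_s.reachableIn_image_Icc h.length_pos le_rfl).symm
    (by rintro j hj ⟨k, hk, heq⟩
        exact h.s_ne_c k hk.2 j hj heq)
    (by rintro _ ⟨k, hk, rfl⟩ j hj hadj
        rw [h.eq_length_of_adj_c k hk.2 j hj hadj])
    h.exists_adj_c
  refine ⟨o, A, htripod, hsub, fun i => ?_⟩
  rcases ho i with heq | ⟨-, j, hj, heq⟩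
  · obtain ⟨j, hj, hadj⟩ := h.exists_adj_c
    exact ⟨j, hj, heq ▸ (dist_eq_one_iff_adj.2 hadj).le⟩
  · exact ⟨j, hj, by simp [heq]⟩

lemma hasTTheta_or_hasTPyramid_or_hasTPrism (h : IsTurtle G b c s n m l) (hG : G.Connected)
    (hfat : ∀ j ≤ m, t + 3 ≤ G.dist (s 0) (c j)) :
    HasTTheta G t ∨ HasTPyramid G t ∨ HasTPrism G t := by
  obtain ⟨o, A, htripod, hA, ho⟩ := h.exists_isTripod_b
  obtain ⟨o', A', htripod', hA', ho'⟩ := h.exists_isTripod_c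
  refine htripod.hasTTheta_or_hasTPyramid_or_hasTPrism htripod' (h.isLinked hA hA') fun i i' => ?_
  obtain ⟨j, hj, hj'⟩ := ho' i'
  have hi := ho i
  have hij := hfat j hj
  have h₁ := hG.dist_triangle (u := s 0) (v := o i) (w := c j)
  have h₂ := hG.dist_triangle (u := o i) (v := o' i') (w := c j)
  omega

end IsTurtle

end Turtles

section RadialSeparation

variable {G : SimpleGraph V} {r u v w x : V} {d d' : ℕ}

/-- The distance of `u` and `v` exceeds the difference of their distances to `r` by at least `d`.
Equivalently, the Gromov products of `r` and `v` at `u` and of `r` and `u` at `v` are at least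
`d / 2`. -/
def RadiallySeparated (G : SimpleGraph V) (r : V) (d : ℕ) (u v : V) : Prop :=
  G.dist r u + d ≤ G.dist r v + G.dist u v ∧ G.dist r v + d ≤ G.dist r u + G.dist u v

lemma radiallySeparated_zero (hG : G.Connected) (r u v : V) : RadiallySeparated G r 0 u v :=
  ⟨SimpleGraph.dist_comm (G := G) (u := u) (v := v) ▸ hG.dist_triangle, hG.dist_triangle⟩

namespace RadiallySeparated

lemma symm (h : RadiallySeparated G r d u v) : RadiallySeparated G r d v u := by
  rw [RadiallySeparated, SimpleGraph.dist_comm (u := v)]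
  exact And.symm h

lemma eq_zero_of_self (h : RadiallySeparated G r d u u) : d = 0 := by
  have := h.1
  rw [SimpleGraph.dist_self] at this
  omega

lemma eq_zero_of_root (h : RadiallySeparated G r d r v) : d = 0 := by
  have := h.2
  rw [SimpleGraph.dist_self] at this
  omega

lemma add (huv : RadiallySeparated G r d u v) (hvw : RadiallySeparated G r d' v w)
    (hdist : G.dist u w = G.dist u v + G.dist v w) : RadiallySeparated G r (d + d') u w := by
  obtain ⟨h₁, h₂⟩ := huv
  obtain ⟨h₃, h₄⟩ := hvw
  constructor <;> omega

lemma le_two_of_adj (h : RadiallySeparated G r d x u) (hG : G.Connected)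
    (hw : G.dist r x = G.dist r w + G.dist w x) (hwu : G.Adj w u) : d ≤ 2 := by
  have h₁ := h.1
  have h₂ := hG.dist_triangle (u := r) (v := w) (w := u)
  have h₃ := hG.dist_triangle (u := x) (v := w) (w := u)
  rw [dist_eq_one_iff_adj.2 hwu] at h₂ h₃
  rw [SimpleGraph.dist_comm (u := x) (v := w)] at h₃
  omega

lemma le_two_mul_dist_add_four {u' w' : V} (h : RadiallySeparated G r d u u') (hG : G.Connected)
    (hwu : G.Adj w u) (hwu' : G.Adj w' u') (hv : G.dist r w = G.dist w v + G.dist r v) :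
    d ≤ 2 * G.dist w' v + 4 := by
  have h₁ := h.1
  have hru : G.dist r w ≤ G.dist r u + 1 :=
    hG.dist_triangle.trans_eq (congrArg _ (dist_eq_one_iff_adj.2 hwu.symm))
  have hru' : G.dist r u' ≤ G.dist r v + G.dist w' v + 1 := by
    have h₂ := hG.dist_triangle (u := r) (v := v) (w := u')
    have h₃ := hG.dist_triangle (u := v) (v := w') (w := u')
    rw [dist_eq_one_iff_adj.2 hwu', SimpleGraph.dist_comm (u := v) (v := w')] at h₃
    omega
  have huu' : G.dist u u' ≤ 1 + G.dist w v + G.dist w' v + 1 := by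
    have h₂ := hG.dist_triangle (u := u) (v := w) (w := u')
    have h₃ := hG.dist_triangle (u := w) (v := v) (w := u')
    have h₄ := hG.dist_triangle (u := v) (v := w') (w := u')
    rw [dist_eq_one_iff_adj.2 hwu.symm] at h₂
    rw [dist_eq_one_iff_adj.2 hwu', SimpleGraph.dist_comm (u := v) (v := w')] at h₄
    omega
  omega

end RadiallySeparated

lemma exists_walk_segment (p : G.Walk u v) {a b : ℕ} (hab : a ≤ b) (hb : b ≤ p.length) :
    ∃ s : G.Walk (p.getVert a) (p.getVert b), s.length = b - a ∧
      ∀ q ∈ Set.Icc a b, p.getVert q ∈ s.support := by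
  have hend : (p.drop a).getVert (b - a) = p.getVert b := by
    rw [Walk.drop_getVert, Nat.add_sub_cancel' hab]
  have hlen : ((p.drop a).take (b - a)).length = b - a := by
    rw [Walk.take_length, Walk.drop_length]
    omega
  refine ⟨((p.drop a).take (b - a)).copy rfl hend, (Walk.length_copy ..).trans hlen, ?_⟩
  rintro q ⟨haq, hqb⟩
  rw [Walk.support_copy, Walk.mem_support_iff_exists_getVert]
  refine ⟨q - a, ?_, by omega⟩
  rw [Walk.take_getVert, Walk.drop_getVert, min_eq_right (by omega), Nat.add_sub_cancel' haq]

lemma exists_isIsometricPath_of_not_radiallySeparated (hG : G.Connected) (s : G.Walk u v)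
    (hs : s.length = G.dist u v) (h : ¬ RadiallySeparated G r 1 u v) :
    ∃ q : Σ z : V, G.Walk r z, IsIsometricPath G q.2 ∧ s.support ⊆ q.2.support := by
  obtain ⟨p, hp⟩ := hG.exists_walk_length_eq_dist r u
  obtain ⟨q, hq⟩ := hG.exists_walk_length_eq_dist r v
  have hlen : (p.append s).length = G.dist r v ∨ (q.append s.reverse).length = G.dist r u := by
    obtain ⟨h₁, h₂⟩ := radiallySeparated_zero hG r u v
    rw [RadiallySeparated] at h
    rw [Walk.length_append, Walk.length_append, Walk.length_reverse]
    omega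
  rcases hlen with hlen | hlen
  · refine ⟨⟨v, p.append s⟩, ⟨Walk.isPath_of_length_eq_dist _ hlen, hlen⟩, ?_⟩
    exact Walk.support_subset_support_append_right p s
  · refine ⟨⟨u, q.append s.reverse⟩, ⟨Walk.isPath_of_length_eq_dist _ hlen, hlen⟩, fun z hz => ?_⟩
    rw [Walk.mem_support_append_iff, Walk.support_reverse, List.mem_reverse]
    exact Or.inr hz

end RadialSeparation

section Covers

variable {G : SimpleGraph V} {r x y : V} {p : G.Walk x y}

lemma CoveredBy.mono {k k' : ℕ} (h : CoveredBy G r p k) (hk : k ≤ k') :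
    CoveredBy G r p k' := by
  obtain ⟨s, hcard, hs⟩ := h
  exact ⟨s, hcard.trans hk, hs⟩

lemma coveredBy_of_intervals (hG : G.Connected) (hp : p.length = G.dist x y)
    {I : Finset (ℕ × ℕ)}
    (hI : ∀ i ∈ I, i.1 ≤ i.2 ∧ i.2 ≤ p.length ∧
      ¬ RadiallySeparated G r 1 (p.getVert i.1) (p.getVert i.2))
    (hcov : ∀ q ≤ p.length, ∃ i ∈ I, q ∈ Set.Icc i.1 i.2) : CoveredBy G r p I.card := by
  classical
  have hsegment : ∀ i : I, ∃ Q : Σ v : V, G.Walk r v, IsIsometricPath G Q.2 ∧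
      ∀ q ∈ Set.Icc i.1.1 i.1.2, p.getVert q ∈ Q.2.support := by
    rintro ⟨i, hi⟩
    obtain ⟨hi₁₂, hi₂, hsep⟩ := hI i hi
    obtain ⟨s, hs, hsmem⟩ := exists_walk_segment p hi₁₂ hi₂
    have hdist := isGeodesicSeq_getVert p hp i.1 i.2 hi₁₂ hi₂
    obtain ⟨Q, hQ, hsQ⟩ :=
      exists_isIsometricPath_of_not_radiallySeparated hG s (hs.trans hdist.symm) hsep
    exact ⟨Q, hQ, fun q hq => hsQ (hsmem q hq)⟩
  choose Q hQ hQmem using hsegment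
  refine ⟨I.attach.image Q, Finset.card_image_le.trans_eq I.card_attach, fun q hq => ?_,
    fun v hv => ?_⟩
  · obtain ⟨i, -, rfl⟩ := Finset.mem_image.1 hq
    exact hQ i
  · obtain ⟨q, rfl, hq⟩ := Walk.mem_support_iff_exists_getVert.1 hv
    obtain ⟨i, hi, hqi⟩ := hcov q hq
    exact ⟨Q ⟨i, hi⟩, Finset.mem_image_of_mem Q (Finset.mem_attach _ _), hQmem ⟨i, hi⟩ q hqi⟩

end Covers

section GreedyChains

lemma exists_cover_or_chain {bad : ℕ → ℕ → Prop} (hbad : ∀ a, ¬ bad a a) {N s : ℕ} (hs : s ≤ N)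
    (k : ℕ) :
    (∃ I : Finset (ℕ × ℕ), I.card ≤ k ∧ (∀ z ∈ I, z.1 ≤ z.2 ∧ z.2 ≤ N ∧ ¬ bad z.1 z.2) ∧
      ∀ q ∈ Set.Icc s N, ∃ z ∈ I, q ∈ Set.Icc z.1 z.2) ∨
    ∃ y : ℕ → ℕ, y 0 = s ∧ (∀ i ≤ k, y i ≤ N) ∧
      ∀ i < k, y i < y (i + 1) ∧ bad (y i) (y (i + 1)) := by
  classical
  induction k generalizing s with
  | zero => exact Or.inr ⟨fun _ => s, rfl, fun _ _ => hs, fun _ hi => absurd hi (Nat.not_lt_zero _)⟩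
  | succ k ih =>
    by_cases hex : ∃ b, s ≤ b ∧ b ≤ N ∧ bad s b
    · obtain ⟨hsb, hbN, hb⟩ := Nat.find_spec hex
      have hmin := fun a => Nat.find_min (H := hex) (m := a)
      set b := Nat.find hex
      have hlt : s < b := hsb.lt_of_ne fun h => hbad s (h ▸ hb)
      rcases ih hbN with ⟨I, hcard, hI, hcov⟩ | ⟨y, hy0, hyN, hy⟩
      · refine Or.inl ⟨insert (s, b - 1) I, (Finset.card_insert_le _ _).trans (by omega),
          (Finset.forall_mem_insert _ _ _).2 ⟨⟨by omega, by omega, fun h => ?_⟩, hI⟩, ?_⟩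
        · exact hmin (b - 1) (by omega) ⟨by omega, by omega, h⟩
        · rintro q ⟨hsq, hqN⟩
          rcases lt_or_ge q b with hq | hq
          · exact ⟨_, Finset.mem_insert_self _ _, hsq, by omega⟩
          · obtain ⟨z, hz, hqz⟩ := hcov q ⟨hq, hqN⟩
            exact ⟨z, Finset.mem_insert_of_mem hz, hqz⟩
      · refine Or.inr ⟨fun i => i.casesOn s y, rfl, fun i hi => ?_, fun i hi => ?_⟩
        · obtain _ | i := i
          exacts [hs, hyN i (by omega)]
        · obtain _ | i := i
          exacts [by simpa only [hy0] using ⟨hlt, hb⟩, hy i (by omega)]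
    · refine Or.inl ⟨{(s, N)}, by simp, fun z hz => ?_,
        fun q hq => ⟨_, Finset.mem_singleton_self _, hq⟩⟩
      obtain rfl := Finset.mem_singleton.1 hz
      exact ⟨hs, le_rfl, fun h => hex ⟨N, hs, le_rfl, h⟩⟩

variable {G : SimpleGraph V} {r : V} {P : ℕ → V} {N k : ℕ} {y : ℕ → ℕ}

/-- The vertices `P (y 0), …, P (y k)` occur in this order on the path `P 0, …, P N`, and
consecutive ones are radially separated by at least `1`. -/
structure IsSeparatedChain (G : SimpleGraph V) (r : V) (P : ℕ → V) (N : ℕ) (y : ℕ → ℕ)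
    (k : ℕ) : Prop where
  lt_succ : ∀ i < k, y i < y (i + 1)
  le : ∀ i ≤ k, y i ≤ N
  separated : ∀ i < k, RadiallySeparated G r 1 (P (y i)) (P (y (i + 1)))

namespace IsSeparatedChain

lemma strictMonoOn (hy : IsSeparatedChain G r P N y k) : StrictMonoOn y (Set.Iic k) :=
  strictMonoOn_Iic_of_lt_succ hy.lt_succ

lemma radiallySeparated (hy : IsSeparatedChain G r P N y k) (hG : G.Connected)
    (hP : IsGeodesicSeq G P N) {i j a b : ℕ} (hij : i ≤ j) (hj : j ≤ k) (ha : a ≤ y i)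
    (hb : y j ≤ b) (hbN : b ≤ N) : RadiallySeparated G r (j - i) (P a) (P b) := by
  have hadd : ∀ u v w, u ≤ v → v ≤ w → w ≤ N →
      G.dist (P u) (P w) = G.dist (P u) (P v) + G.dist (P v) (P w) := fun u v w huv hvw hw => by
    rw [hP u w (huv.trans hvw) hw, hP u v huv (hvw.trans hw), hP v w hvw hw]
    omega
  have hle : ∀ i' j', i' ≤ j' → j' ≤ k → y i' ≤ y j' := fun i' j' h h' =>
    hy.strictMonoOn.monotoneOn (h.trans h') h' h
  induction j, hij using Nat.le_induction generalizing b with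
  | base =>
    rw [Nat.sub_self]
    exact radiallySeparated_zero hG r _ _
  | succ j hij ih =>
    have hlast := hy.lt_succ j hj
    have hsep := (ih (by omega) le_rfl (by omega)).add (hy.separated j hj)
      (hadd a _ _ (ha.trans (hle i j hij (by omega))) hlast.le (hy.le _ hj))
    have := hsep.add (radiallySeparated_zero hG r (P (y (j + 1))) (P b))
      (hadd a _ b (ha.trans (hle i (j + 1) (by omega) hj)) hb hbN)
    rwa [Nat.succ_sub hij]

lemma root_notMem (hy : IsSeparatedChain G r P N y k) (hG : G.Connected)
    (hP : IsGeodesicSeq G P N) (hk : 2 ≤ k) : r ∉ P '' Set.Iic N := by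
  rintro ⟨q, hq, rfl⟩
  rcases le_total q (y 1) with h | h
  · have := hy.radiallySeparated hG hP (i := 1) (j := 2) (by omega) hk h le_rfl (hy.le 2 hk)
    exact absurd this.eq_zero_of_root (by decide)
  · have := hy.radiallySeparated hG hP (i := 0) (j := 1) (by omega) (by omega) le_rfl h hq
    exact absurd this.symm.eq_zero_of_root (by decide)

end IsSeparatedChain

end GreedyChains

section Tails

variable {G : SimpleGraph V} {r x w : V} {S T : Set V} {P : ℕ → V} {N k d m : ℕ} {y : ℕ → ℕ}

/-- `T` is the vertex set of a geodesic from `w` to `r` that avoids `S`, and `w` is the only one of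
its vertices with a neighbour in `S`. -/
structure IsTail (G : SimpleGraph V) (r : V) (S : Set V) (w : V) (T : Set V) : Prop where
  reachable : ReachableIn G T w r
  dist_eq : ∀ v ∈ T, G.dist r w = G.dist w v + G.dist r v
  notMem : ∀ v ∈ T, v ∉ S
  eq_of_adj : ∀ v ∈ T, ∀ u ∈ S, G.Adj v u → v = w
  exists_adj : ∃ u ∈ S, G.Adj w u

/-- Cut a geodesic from `x` to `r` at the last vertex with a neighbour in `S`. -/
lemma exists_isTail (hG : G.Connected) (hx : x ∈ S) (hr : r ∉ S) :
    ∃ w T, IsTail G r S w T ∧ G.dist r x = G.dist r w + G.dist w x := by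
  obtain ⟨p, hp⟩ := hG.exists_walk_length_eq_dist x r
  have hgeo := isGeodesicSeq_getVert p hp
  obtain ⟨_, b, _, hbn, _, hb, hbmax⟩ := exists_first_last (p := fun i => p.getVert i ∈ S)
    ⟨0, p.length.zero_le, p.getVert_zero.symm ▸ hx⟩
  have hbn' : b < p.length := hbn.lt_of_ne fun h => hr (by rwa [h, p.getVert_length] at hb)
  have hadj : ∃ u ∈ S, G.Adj (p.getVert (b + 1)) u := ⟨_, hb, (p.adj_getVert_succ hbn').symm⟩
  obtain ⟨_, a, _, han, _, ha, hamax⟩ := exists_first_last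
    (p := fun i => ∃ u ∈ S, G.Adj (p.getVert i) u) ⟨b + 1, hbn', hadj⟩
  have hba : b + 1 ≤ a := (hamax _ hbn' hadj).2
  have hdist : ∀ i ≤ p.length, G.dist r (p.getVert i) = p.length - i := fun i hi => by
    rw [SimpleGraph.dist_comm, ← hgeo i p.length hi le_rfl, p.getVert_length]
  refine ⟨p.getVert a, p.getVert '' Set.Icc a p.length, ⟨?_, ?_, ?_, ?_, ha⟩, ?_⟩
  · have := hgeo.isInducedSeq.reachableIn_image_Icc han le_rfl
    rwa [p.getVert_length] at this
  · rintro _ ⟨i, ⟨hai, hin⟩, rfl⟩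
    rw [hgeo a i hai hin, hdist a han, hdist i hin]
    omega
  · rintro _ ⟨i, ⟨hai, hin⟩, rfl⟩ hi
    have := (hbmax i hin hi).2
    omega
  · rintro _ ⟨i, ⟨hai, hin⟩, rfl⟩ u hu hiu
    rw [hai.antisymm (hamax i hin ⟨u, hu, hiu⟩).2]
  · have hxa := hgeo 0 a a.zero_le han
    have hxr := hdist 0 p.length.zero_le
    rw [p.getVert_zero] at hxa hxr
    rw [hxr, hdist a han, SimpleGraph.dist_comm (v := x), hxa]
    omega

lemma IsTail.exists_le_adj (h : IsTail G r (P '' Set.Iic N) w T) : ∃ q ≤ N, G.Adj w (P q) :=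
  Set.exists_mem_image.1 h.exists_adj

namespace IsSeparatedChain

variable {i j q : ℕ}

lemma lt_of_adj (hy : IsSeparatedChain G r P N y k) (hG : G.Connected) (hP : IsGeodesicSeq G P N)
    (hw : G.dist r (P (y i)) = G.dist r w + G.dist w (P (y i))) (hq : q ≤ N) (hwq : G.Adj w (P q))
    (hij : i + 3 ≤ j) (hj : j ≤ k) : q < y j := by
  by_contra! h
  have := (hy.radiallySeparated hG hP (by omega) hj le_rfl h hq).le_two_of_adj hG hw hwq
  omega

lemma gt_of_adj (hy : IsSeparatedChain G r P N y k) (hG : G.Connected) (hP : IsGeodesicSeq G P N)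
    (hw : G.dist r (P (y i)) = G.dist r w + G.dist w (P (y i))) (hwq : G.Adj w (P q))
    (hji : j + 3 ≤ i) (hi : i ≤ k) : y j < q := by
  by_contra! h
  have := (hy.radiallySeparated hG hP (by omega) hi h le_rfl (hy.le i hi)).symm.le_two_of_adj
    hG hw hwq
  omega

/-- The tail of a chain vertex has its contacts fewer than `3` chain steps away from that vertex,
so chain vertices `d + 6` steps apart have tails whose contacts are `d` steps apart. -/
lemma exists_forall_isTail (hy : IsSeparatedChain G r P N y k) (hG : G.Connected)
    (hP : IsGeodesicSeq G P N) (hr : r ∉ P '' Set.Iic N) (hk : m * (d + 6) ≤ k) :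
    ∃ (w : Fin (m + 1) → V) (T : Fin (m + 1) → Set V),
      (∀ i, IsTail G r (P '' Set.Iic N) (w i) (T i)) ∧
      ∀ i j, i < j → ∀ q ≤ N, ∀ q' ≤ N, G.Adj (w i) (P q) → G.Adj (w j) (P q') →
        q < q' ∧ RadiallySeparated G r d (P q) (P q') := by
  have hik (i : Fin (m + 1)) : i * (d + 6) ≤ k :=
    (Nat.mul_le_mul_right _ (Nat.le_of_lt_succ i.2)).trans hk
  choose w T hT hw using fun i : Fin (m + 1) =>
    exists_isTail hG (Set.mem_image_of_mem P (Set.mem_Iic.2 (hy.le _ (hik i)))) hr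
  refine ⟨w, T, hT, fun i j hij q hq q' hq' hwq hwq' => ?_⟩
  have hstep : i * (d + 6) + (d + 6) ≤ j * (d + 6) := by
    rw [← Nat.succ_mul]
    exact Nat.mul_le_mul_right _ hij
  have hjk := hik j
  have hlt := hy.lt_of_adj hG hP (hw i) hq hwq le_rfl (by omega)
  have hgt := hy.gt_of_adj (j := i * (d + 6) + 3 + d) hG hP (hw j) hwq' (by omega) hjk
  have hmono := hy.strictMonoOn.monotoneOn (a := i * (d + 6) + 3) (b := i * (d + 6) + 3 + d)
    (Set.mem_Iic.2 (by omega)) (Set.mem_Iic.2 (by omega)) (Nat.le_add_right _ _)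
  refine ⟨by omega, ?_⟩
  have := hy.radiallySeparated hG hP (Nat.le_add_right _ d) (by omega) hlt.le hgt.le hq'
  rwa [Nat.add_sub_cancel_left] at this

end IsSeparatedChain

end Tails

section TurtlesFromTails

variable {G : SimpleGraph V} {r : V} {P : ℕ → V} {N : ℕ} {S : Set V} {w : Fin 3 → V}
  {T : Fin 3 → Set V}

namespace IsTail

lemma exists_upper_paths (hT : ∀ i, IsTail G r S (w i) (T i))
    (hfar : ∀ v ∈ T 0 ∪ T 2, 2 ≤ G.dist (w 1) v) :
    ∃ c s m l, IsInducedSeq G c m ∧ c 0 = w 0 ∧ c m = w 2 ∧ (∀ j ≤ m, c j ∈ T 0 ∪ T 2) ∧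
      IsInducedSeq G s l ∧ s 0 = w 1 ∧ 0 < l ∧ (∀ k ≤ l, s k ∈ ⋃ i, T i) ∧
      (∀ k ≤ l, ∀ j ≤ m, s k ≠ c j) ∧ (∀ k ≤ l, ∀ j ≤ m, G.Adj (s k) (c j) → k = l) ∧
      ∃ j ≤ m, G.Adj (s l) (c j) := by
  obtain ⟨p, hpT, hp⟩ := (((hT 0).reachable.mono Set.subset_union_left).trans
    ((hT 2).reachable.mono Set.subset_union_right).symm).exists_isInducedSeq
  obtain ⟨s, l, hs0, hl, hs, hsT, hsp, hsl, v, ⟨j, hj, rfl⟩, hjl⟩ :=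
    (((hT 1).reachable.mono (Set.subset_iUnion T 1)).trans
      ((hT 0).reachable.mono (Set.subset_iUnion T 0)).symm).exists_isInducedSeq_attached
      (R := p.getVert '' Set.Iic p.length) ⟨0, p.length.zero_le, p.getVert_zero⟩
      (fun ⟨j, _, hj⟩ => by simpa [hj] using hfar _ (hpT j))
      (by rintro _ ⟨j, -, rfl⟩ hj; simpa [dist_eq_one_iff_adj.2 hj] using hfar _ (hpT j))
  exact ⟨p.getVert, s, p.length, l, hp, p.getVert_zero, p.getVert_length, fun j _ => hpT j, hs, hs0,
    hl, hsT, fun k hk j hj h => hsp k hk ⟨j, hj, h.symm⟩,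
    fun k hk j hj => hsl k hk _ ⟨j, hj, rfl⟩, j, hj, hjl⟩

lemma exists_lower_path (hT : ∀ i, IsTail G r (P '' Set.Iic N) (w i) (T i))
    (hlt : ∀ i j, i < j → ∀ q ≤ N, ∀ q' ≤ N, G.Adj (w i) (P q) → G.Adj (w j) (P q') → q < q') :
    ∃ a n, a + n ≤ N ∧ (∀ i ≤ n, G.Adj (w 0) (P (a + i)) ↔ i = 0) ∧
      (∀ i ≤ n, G.Adj (w 2) (P (a + i)) ↔ i = n) ∧ ∃ i ≤ n, G.Adj (w 1) (P (a + i)) := by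
  obtain ⟨_, a, -, haN, _, ha, hamax⟩ := exists_first_last (hT 0).exists_le_adj
  obtain ⟨b, _, hbb, hbN, hb, _, hbmin⟩ := exists_first_last (hT 2).exists_le_adj
  obtain ⟨q, hqN, hq⟩ := (hT 1).exists_le_adj
  have haq : a < q := hlt 0 1 (by decide) a haN q hqN ha hq
  have hqb : q < b := hlt 1 2 (by decide) q hqN b (hbb.trans hbN) hq hb
  refine ⟨a, b - a, by omega, fun i hi => ⟨fun h => ?_, ?_⟩, fun i hi => ⟨fun h => ?_, ?_⟩,
    q - a, by omega, by rwa [Nat.add_sub_cancel' haq.le]⟩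
  · have := (hamax (a + i) (by omega) h).2
    omega
  · rintro rfl
    exact ha
  · have := (hbmin (a + i) (by omega) h).1
    omega
  · rintro rfl
    rwa [Nat.add_sub_cancel' (haq.trans hqb).le]

lemma exists_isTurtle (hT : ∀ i, IsTail G r (P '' Set.Iic N) (w i) (T i)) (hP : IsInducedSeq G P N)
    (hlt : ∀ i j, i < j → ∀ q ≤ N, ∀ q' ≤ N, G.Adj (w i) (P q) → G.Adj (w j) (P q') → q < q')
    (hfar : ∀ v ∈ T 0 ∪ T 2, 2 ≤ G.dist (w 1) v) :
    ∃ b c s n m l, IsTurtle G b c s n m l ∧ s 0 = w 1 ∧ ∀ j ≤ m, c j ∈ T 0 ∪ T 2 := by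
  obtain ⟨c, s, m, l, hc, hc0, hcm, hcT, hs, hs0, hl, hsT, hsc, hscl, hslc⟩ :=
    exists_upper_paths hT hfar
  obtain ⟨a, n, han, hw0, hw2, hw1⟩ := exists_lower_path hT hlt
  have hPT : ∀ i ≤ n, ∀ v ∈ ⋃ i, T i, v ≠ P (a + i) := by
    rintro i hi v hv rfl
    obtain ⟨j, hj⟩ := Set.mem_iUnion.1 hv
    exact (hT j).notMem _ hj ⟨a + i, Set.mem_Iic.2 (by omega), rfl⟩
  have hend : ∀ i ≤ n, ∀ v ∈ ⋃ i, T i, G.Adj v (P (a + i)) → ∃ j, v = w j := by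
    intro i hi v hv hadj
    obtain ⟨j, hj⟩ := Set.mem_iUnion.1 hv
    exact ⟨j, (hT j).eq_of_adj v hj _ ⟨a + i, Set.mem_Iic.2 (by omega), rfl⟩ hadj⟩
  have hcT' : ∀ j ≤ m, c j ∈ ⋃ i, T i := fun j hj => (hcT j hj).elim
    (fun h => Set.mem_iUnion_of_mem 0 h) fun h => Set.mem_iUnion_of_mem 2 h
  have hPc : ∀ i ≤ n, ∀ j ≤ m, G.Adj (P (a + i)) (c j) ↔ i = 0 ∧ j = 0 ∨ i = n ∧ j = m := by
    refine fun i hi j hj => ⟨fun hadj => ?_, ?_⟩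
    · obtain ⟨e, he⟩ := hend i hi _ (hcT' j hj) hadj.symm
      fin_cases e
      · exact Or.inl ⟨(hw0 i hi).1 (he ▸ hadj.symm), hc.injOn hj m.zero_le (he.trans hc0.symm)⟩
      · exact absurd (hfar _ (hcT j hj)) (by simp [he])
      · exact Or.inr ⟨(hw2 i hi).1 (he ▸ hadj.symm),
          hc.injOn hj Set.self_mem_Iic (he.trans hcm.symm)⟩
    · rintro (⟨rfl, rfl⟩ | ⟨rfl, rfl⟩)
      · exact hc0 ▸ ((hw0 0 hi).2 rfl).symm
      · exact hcm ▸ ((hw2 i hi).2 rfl).symm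
  have hsP : ∀ k ≤ l, ∀ i ≤ n, G.Adj (s k) (P (a + i)) → k = 0 := by
    intro k hk i hi hadj
    obtain ⟨e, he⟩ := hend i hi _ (hsT k hk) hadj
    fin_cases e
    · exact absurd (he.trans hc0.symm) (hsc k hk 0 m.zero_le)
    · exact hs.injOn hk l.zero_le (he.trans hs0.symm)
    · exact absurd (he.trans hcm.symm) (hsc k hk m le_rfl)
  exact ⟨fun i => P (a + i), c, s, n, m, l, {
    isInducedSeq_b := hP.shift han
    isInducedSeq_c := hc
    isInducedSeq_s := hs
    length_pos := hl
    b_ne_c := fun i hi j hj => (hPT i hi _ (hcT' j hj)).symm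
    s_ne_b := fun k hk i hi => hPT i hi _ (hsT k hk)
    s_ne_c := hsc
    adj_b_c_iff := hPc
    eq_zero_of_adj_b := hsP
    eq_length_of_adj_c := hscl
    exists_adj_b := hs0 ▸ hw1
    exists_adj_c := hslc }, hs0, hcT⟩

end IsTail

end TurtlesFromTails

section ThreeTails

variable {G : SimpleGraph V} {r : V} {P : ℕ → V} {N t : ℕ} {y : ℕ → ℕ}

lemma IsSeparatedChain.hasTTheta_or_hasTPyramid_or_hasTPrism
    (hy : IsSeparatedChain G r P N y (4 * t + 30)) (hG : G.Connected) (hP : IsGeodesicSeq G P N) :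
    HasTTheta G t ∨ HasTPyramid G t ∨ HasTPrism G t := by
  obtain ⟨w, T, hT, hwT⟩ := hy.exists_forall_isTail (m := 2) (d := 2 * t + 9) hG hP
    (hy.root_notMem hG hP (by omega)) (by omega)
  obtain ⟨q₀, hq₀, hwq₀⟩ := (hT 0).exists_le_adj
  obtain ⟨q₁, hq₁, hwq₁⟩ := (hT 1).exists_le_adj
  obtain ⟨q₂, hq₂, hwq₂⟩ := (hT 2).exists_le_adj
  have hfar : ∀ v ∈ T 0 ∪ T 2, t + 3 ≤ G.dist (w 1) v := by
    rintro v (hv | hv)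
    · have := (hwT 0 1 (by decide) q₀ hq₀ q₁ hq₁ hwq₀ hwq₁).2.le_two_mul_dist_add_four hG hwq₀ hwq₁
        ((hT 0).dist_eq v hv)
      omega
    · have := (hwT 1 2 (by decide) q₁ hq₁ q₂ hq₂ hwq₁ hwq₂).2.symm.le_two_mul_dist_add_four hG
        hwq₂ hwq₁ ((hT 2).dist_eq v hv)
      omega
  obtain ⟨b, c, s, n, m, l, hturtle, hs0, hc⟩ := IsTail.exists_isTurtle hT hP.isInducedSeq
    (fun i j hij q hq q' hq' h h' => (hwT i j hij q hq q' hq' h h').1)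
    fun v hv => le_trans (by omega) (hfar v hv)
  exact hturtle.hasTTheta_or_hasTPyramid_or_hasTPrism hG fun j hj => hs0 ▸ hfar _ (hc j hj)

end ThreeTails

theorem statement8_general {G : SimpleGraph V} (hG : G.Connected) {t : ℕ}
    (h1 : ¬ HasTTheta G t) (h2 : ¬ HasTPyramid G t) (h3 : ¬ HasTPrism G t) (r : V) {x y : V}
    {p : G.Walk x y} (hp : IsIsometricPath G p) : CoveredBy G r p (4 * t + 30) := by
  have hP := isGeodesicSeq_getVert p hp.2
  obtain ⟨I, hcard, hI, hcov⟩ | ⟨y, -, hyN, hy⟩ := exists_cover_or_chain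
    (bad := fun a b => RadiallySeparated G r 1 (p.getVert a) (p.getVert b))
    (fun _ h => absurd h.eq_zero_of_self one_ne_zero) p.length.zero_le (4 * t + 30)
  · exact (coveredBy_of_intervals hG hp.2 hI fun q hq => hcov q ⟨q.zero_le, hq⟩).mono hcard
  · have hchain : IsSeparatedChain G r p.getVert p.length y (4 * t + 30) :=
      ⟨fun i hi => (hy i hi).1, hyN, fun i hi => (hy i hi).2⟩
    rcases hchain.hasTTheta_or_hasTPyramid_or_hasTPrism hG hP with h | h | h
    exacts [absurd h h1, absurd h h2, absurd h h3]

/-- Every (`t`-theta, `t`-pyramid, `t`-prism)-free connected graph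
has isometric path complexity at most `8t + 63`: there is a vertex `r` such that
every isometric path can be covered by `8t + 63` many `r`-rooted isometric paths.
(In particular, for `t = 1`, every (theta, pyramid, prism)-free graph has
isometric path complexity at most `71`.) -/
theorem statement8 [Fintype V] [Nonempty V] (G : SimpleGraph V) (hG : G.Connected)
    (t : ℕ) (ht : 1 ≤ t)
    (h1 : ¬ HasTTheta G t) (h2 : ¬ HasTPyramid G t) (h3 : ¬ HasTPrism G t) :
    ∃ r : V, ∀ (x y : V) (p : G.Walk x y), IsIsometricPath G p →
      CoveredBy G r p (8 * t + 63) := by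
  obtain ⟨r⟩ := ‹Nonempty V›
  exact ⟨r, fun _ _ _ hp => (statement8_general hG h1 h2 h3 r hp).mono (by omega)⟩
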